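/- Let U ⊆ ℂ² be open, F : U → ℂ holomorphic with (∂F/∂x, ∂F/∂y) ≠ (0,0) at every point of U, and ω = (P,Q) a holomorphic 1-form on U. Let k ≥ 1 and let G₁,…,G_k, R₁,…,R_k be holomorphic functions on U. Define on U × ℂ: G = 1 + Σ_{i=1}^{k} ε^i G_i, A = G·(∂F/∂x + εP), B = G·(∂F/∂y + εQ), C = Σ_{i=1}^{k} ε^{i−1} R_i, Ω = (A,B,C). Assume that the integrability coefficient ⟨Ω ∧ dΩ⟩ has identically vanishing coefficient of ε^n for every n ≤ k − 1. Then there exist a Françoise sequence (g_i, r_i), 1 ≤ i ≤ k, for dF + εω and holomorphic functions n₁,…,n_k on U such that, setting N = 1 + Σ_{i=1}^{k} ε^i n_i and F_ε = F + Σ_{i=1}^{k} (−1)^{i+1} ε^i r_i, the following congruences of polynomials in ε hold on U: A ≡ N·∂F_ε/∂x and B ≡ N·∂F_ε/∂y modulo ε^{k+1}, and C ≡ N·∂F_ε/∂ε modulo ε^{k}. -/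

import Mathlib

/-!
The congruences `A ≡ N ∂ₓF_ε`, `B ≡ N ∂_yF_ε`, `C ≡ N ∂_εF_ε` say that `M = 1/N` is an integrating
factor of `Ω = (A, B, C)` up to order `k`, with potential `Φ = F_ε`. The pair `(M, Φ)` is built one
power of `ε` at a time (`exists_integrating_factor`). Suppose `MΩ` agrees with the total
differential of `Φ` up to order `n`. Adding a multiple of `ε^(n+1)` to `Φ` corrects the
`dε`-component. Because `⟨Ω ∧ dΩ⟩` is multiplied by `M²` when `Ω` is multiplied by `M`
(`bracket_mul`), integrability forces the leading error `(a, b)` of the other two components to be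
proportional to `dF` (`obstruction_vanishes`). As `dF` has no zeros, the factor of proportionality
is holomorphic (`Hol.exists_ratio`), and it is the next coefficient of `M`.

With `H = M G`, the coefficients of `dΦ ≡ H (dF + ε ω)` are the Françoise relations for
`g_i = (-1)^i H_i` and `r_i = (-1)^(i+1) Φ_i` (`francoise_relation`); `N` is the truncated geometric
series inverting `M`.

All of this is algebra in `K[X]`, where `X` stands for `ε` and `K` is a `ℂ`-algebra with two
commuting derivations. It is applied to `K = Hol U`, the algebra of holomorphic functions on `U`.
That `∂ₓ` and `∂_y` preserve `Hol U` is proved by differentiating Cauchy's formula under the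
integral sign (`differentiableOn_fderiv_apply`). The predicate `IsFam` translates between
polynomials over `Hol U` and functions of `(p, ε)`.
-/


/-- ∂/∂x of a function on ℂ². -/
noncomputable def pdx (f : ℂ × ℂ → ℂ) (p : ℂ × ℂ) : ℂ := fderiv ℂ f p (1, 0)

/-- ∂/∂y of a function on ℂ². -/
noncomputable def pdy (f : ℂ × ℂ → ℂ) (p : ℂ × ℂ) : ℂ := fderiv ℂ f p (0, 1)

/-- The integrability coefficient ⟨Ω ∧ dΩ⟩ of the 1-form Ω = A dx + B dy + C dε on
ℂ² × ℂ (coordinates (x,y,ε)), namely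
A·(∂C/∂y − ∂B/∂ε) + B·(∂A/∂ε − ∂C/∂x) + C·(∂B/∂x − ∂A/∂y). -/
noncomputable def intCoeff (A B C : ℂ × ℂ → ℂ → ℂ) (p : ℂ × ℂ) (ε : ℂ) : ℂ :=
  A p ε * (pdy (fun q => C q ε) p - deriv (fun e => B p e) ε) +
  B p ε * (deriv (fun e => A p e) ε - pdx (fun q => C q ε) p) +
  C p ε * (pdx (fun q => B q ε) p - pdy (fun q => A q ε) p)

/-- G = 1 + Σ_{i=1}^{k} ε^i G_i. -/
noncomputable def GserGV (k : ℕ) (G : ℕ → ℂ × ℂ → ℂ) (q : ℂ × ℂ) (e : ℂ) : ℂ :=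
  1 + ∑ i ∈ Finset.Icc 1 k, e ^ i * G i q

/-- C = Σ_{i=1}^{k} ε^{i−1} R_i. -/
noncomputable def CserGV (k : ℕ) (R : ℕ → ℂ × ℂ → ℂ) (q : ℂ × ℂ) (e : ℂ) : ℂ :=
  ∑ i ∈ Finset.Icc 1 k, e ^ (i - 1) * R i q

/-- F_ε = F + Σ_{i=1}^{k} (−1)^{i+1} ε^i r_i. -/
noncomputable def Feps (k : ℕ) (F : ℂ × ℂ → ℂ) (r : ℕ → ℂ × ℂ → ℂ) (e : ℂ)
    (q : ℂ × ℂ) : ℂ :=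
  F q + ∑ i ∈ Finset.Icc 1 k, (-1 : ℂ) ^ (i + 1) * e ^ i * r i q

open Polynomial TopologicalSpace


/-! ### Integrating factors in `K[X]` -/

section Algebra
variable {K : Type*} [CommRing K]

lemma eq_zero_of_X_pow_succ_dvd {n : ℕ} {Z : K[X]} (h : X ^ (n + 1) ∣ X ^ n * Z) :
    Z.coeff 0 = 0 := by
  have := X_pow_dvd_iff.1 h n (Nat.lt_succ_self n)
  simpa [coeff_X_pow_mul'] using this

lemma derivative_X_pow_succ_mul (n : ℕ) (b : K[X]) :
    derivative (X ^ (n + 1) * b) = X ^ n * (((n : K[X]) + 1) * b + X * derivative b) := by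
  simp [derivative_mul]
  ring

lemma exists_truncated_inverse {M : K[X]} (hM : M.coeff 0 = 1) (k : ℕ) :
    ∃ N : K[X], N.coeff 0 = 1 ∧ X ^ (k + 1) ∣ 1 - N * M := by
  have h : X ∣ 1 - M := by simp [X_dvd_iff, hM]
  refine ⟨∑ i ∈ Finset.range (k + 1), (1 - M) ^ i, ?_, ?_⟩
  · rw [finsetSum_coeff, Finset.sum_range_succ']
    simp [coeff_zero_eq_eval_zero] at hM ⊢
    simp [hM]
  · have := geom_sum_mul (1 - M) (k + 1)
    refine (pow_dvd_pow_of_dvd h (k + 1)).trans ⟨1, ?_⟩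
    linear_combination this

/-- The truncation of `p` to degree at most `k`. -/
noncomputable def trunc (k : ℕ) (p : K[X]) : K[X] :=
  C (p.coeff 0) + ∑ i ∈ Finset.Icc 1 k, X ^ i * C (p.coeff i)

lemma X_pow_dvd_sub_trunc (k : ℕ) (p : K[X]) : X ^ (k + 1) ∣ p - trunc k p := by
  rw [X_pow_dvd_iff]
  intro d hd
  rw [trunc, coeff_sub, coeff_add, finsetSum_coeff]
  simp only [coeff_X_pow_mul', coeff_C]
  rcases Nat.eq_zero_or_pos d with rfl | hpos
  · rw [Finset.sum_eq_zero]
    · simp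
    · intro i hi
      simp at hi
      simp; omega
  · rw [Finset.sum_eq_single d]
    · simp [hpos.ne']
    · intro i hi hid
      simp; intros; omega
    · intro h; simp at h; omega

variable [Algebra ℂ K]

/-- The derivation of `K[X]` that applies `D` to each coefficient, so that `X` is a constant. -/
noncomputable def coeffD (D : Derivation ℂ K K) : Derivation ℂ K[X] K[X] :=
  (PolynomialModule.equivPolynomialSelf (R := K)).toLinearMap.compDer D.mapCoeffs

lemma coeff_coeffD (D : Derivation ℂ K K) (p : K[X]) (n : ℕ) :
    (coeffD D p).coeff n = D (p.coeff n) := rfl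

lemma coeffD_C (D : Derivation ℂ K K) (a : K) : coeffD D (C a) = C (D a) := by
  ext n
  simp only [coeff_coeffD, coeff_C]
  split_ifs <;> simp

lemma coeffD_X_pow (D : Derivation ℂ K K) (m : ℕ) : coeffD D (X ^ m) = 0 := by
  ext n
  simp only [coeff_coeffD, coeff_X_pow]
  split_ifs <;> simp

lemma coeffD_X_pow_mul (D : Derivation ℂ K K) (m : ℕ) (p : K[X]) :
    coeffD D (X ^ m * p) = X ^ m * coeffD D p := by
  rw [Derivation.leibniz, coeffD_X_pow, smul_zero, add_zero, smul_eq_mul]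

lemma coeffD_derivative (D : Derivation ℂ K K) (p : K[X]) :
    coeffD D (derivative p) = derivative (coeffD D p) := by
  ext n
  have h : D ((n : K) + 1) = 0 := by
    have := D.map_natCast (n + 1)
    push_cast at this
    exact this
  simp [coeff_coeffD, coeff_derivative, Derivation.leibniz, h, mul_comm]

lemma coeffD_comm {D E : Derivation ℂ K K} (h : ∀ a, D (E a) = E (D a)) (p : K[X]) :
    coeffD D (coeffD E p) = coeffD E (coeffD D p) := by
  ext n
  simp [coeff_coeffD, h]

/-- The integrability coefficient `⟨Θ ∧ dΘ⟩` of `Θ = (A, B, C)` over `K[X]`, with `X` as the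
variable `ε`. -/
noncomputable def bracket (Dx Dy : Derivation ℂ K K) (A B C : K[X]) : K[X] :=
  A * (coeffD Dy C - derivative B) + B * (derivative A - coeffD Dx C) +
    C * (coeffD Dx B - coeffD Dy A)

lemma bracket_mul (Dx Dy : Derivation ℂ K K) (M A B C : K[X]) :
    bracket Dx Dy (M * A) (M * B) (M * C) = M ^ 2 * bracket Dx Dy A B C := by
  simp only [bracket, Derivation.leibniz, derivative_mul, smul_eq_mul]
  ring

lemma natCast_succ_cancel (n : ℕ) {a : K} (h : ((n : K) + 1) * a = 0) : a = 0 := by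
  have h2 : algebraMap ℂ K ((n : ℂ) + 1)⁻¹ * ((n : K) + 1) = 1 := by
    have : ((n : K) + 1) = algebraMap ℂ K ((n : ℂ) + 1) := by simp
    rw [this, ← map_mul, inv_mul_cancel₀ (Nat.cast_add_one_ne_zero n), map_one]
  rw [← one_mul a, ← h2, mul_assoc, h, mul_zero]

/-- If `MΩ` equals the total differential of `Φ` up to an error `X^(n+1) (a, b, c)`, then
`⟨MΩ ∧ d(MΩ)⟩` is `(n+1) Xⁿ (Φₓ b - Φ_y a)` modulo `X^(n+1)`, the only contribution of order `n`
coming from `∂_ε` acting on `X^(n+1)`. Integrability of `Ω` to this order therefore makes `(a, b)`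
proportional to `dΦ` at `X = 0`. -/
lemma obstruction_vanishes {Dx Dy : Derivation ℂ K K} (hcomm : ∀ a, Dx (Dy a) = Dy (Dx a))
    {A B C M Φ a b c : K[X]} {n : ℕ}
    (hI : X ^ (n + 1) ∣ bracket Dx Dy A B C)
    (ha : M * A = coeffD Dx Φ - X ^ (n + 1) * a)
    (hb : M * B = coeffD Dy Φ - X ^ (n + 1) * b)
    (hc : M * C = derivative Φ - X ^ (n + 1) * c) :
    Dx (Φ.coeff 0) * b.coeff 0 = Dy (Φ.coeff 0) * a.coeff 0 := by
  have h1 : X ^ (n + 1) ∣ bracket Dx Dy (M * A) (M * B) (M * C) := by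
    rw [bracket_mul]; exact hI.mul_left _
  set W := bracket Dx Dy (M * A) (M * B) (M * C) with hW
  have h2 : ∃ J, W = X ^ n * ((((n : K[X]) + 1) *
      (coeffD Dx Φ * b - coeffD Dy Φ * a)) + X * J) := by
    rw [hW, bracket, ha, hb, hc]
    simp only [map_sub, derivative_X_pow_succ_mul, coeffD_X_pow_mul, coeffD_derivative,
      coeffD_comm hcomm]
    refine ⟨-(coeffD Dx Φ - X ^ (n+1) * a) * (coeffD Dy c - derivative b)
      - (coeffD Dy Φ - X ^ (n+1) * b) * (derivative a - coeffD Dx c)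
      - (derivative Φ - X ^ (n+1) * c) * (coeffD Dx b - coeffD Dy a), ?_⟩
    ring
  obtain ⟨J, hJ⟩ := h2
  rw [hJ] at h1
  have h3 := eq_zero_of_X_pow_succ_dvd h1
  have h4 : ((n : K) + 1) * (Dx (Φ.coeff 0) * b.coeff 0 - Dy (Φ.coeff 0) * a.coeff 0) = 0 := by
    simpa [coeff_coeffD, mul_coeff_zero] using h3
  exact sub_eq_zero.1 (natCast_succ_cancel n h4)

/-- An integrable `Ω = (A, B, C)` with `(A, B) = dF` at `X = 0` has an integrating factor `M` with
potential `Φ` up to order `n`. The hypothesis `hdiv` is the division property of a nowhere vanishing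
`dF`. -/
lemma exists_integrating_factor {Dx Dy : Derivation ℂ K K}
    (hcomm : ∀ a, Dx (Dy a) = Dy (Dx a)) (F : K)
    (hdiv : ∀ a b : K, Dx F * b = Dy F * a → ∃ l, a = l * Dx F ∧ b = l * Dy F)
    {A B C : K[X]} (hA : A.coeff 0 = Dx F) (hB : B.coeff 0 = Dy F) {k : ℕ}
    (hI : X ^ k ∣ bracket Dx Dy A B C) (n : ℕ) (hn : n ≤ k) :
    ∃ M Φ : K[X], M.coeff 0 = 1 ∧ Φ.coeff 0 = F ∧
      X ^ (n + 1) ∣ coeffD Dx Φ - M * A ∧ X ^ (n + 1) ∣ coeffD Dy Φ - M * B ∧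
      X ^ n ∣ derivative Φ - M * C := by
  induction n with
  | zero =>
    refine ⟨1, Polynomial.C F, by simp, by simp, ?_, ?_, by simp⟩
    · simp [X_dvd_iff, coeff_coeffD, hA]
    · simp [X_dvd_iff, coeff_coeffD, hB]
  | succ n ih =>
    obtain ⟨M, Φ, hM, hΦ, ⟨a, ha⟩, ⟨b, hb⟩, ⟨c, hc⟩⟩ := ih (by omega)
    -- adding `s X^(n+1)` to `Φ` cancels the leading error of the `ε`-component
    set s : K := - algebraMap ℂ K ((n : ℂ) + 1)⁻¹ * c.coeff 0 with hs
    have hs' : ((n : K) + 1) * s = - c.coeff 0 := by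
      have h2 : ((n : K) + 1) * algebraMap ℂ K ((n : ℂ) + 1)⁻¹ = 1 := by
        have : ((n : K) + 1) = algebraMap ℂ K ((n : ℂ) + 1) := by simp
        rw [this, ← map_mul, mul_inv_cancel₀ (Nat.cast_add_one_ne_zero n), map_one]
      rw [hs]
      linear_combination (- c.coeff 0) * h2
    obtain ⟨c', hc'⟩ : X ∣ c + Polynomial.C (((n : K) + 1) * s) := by
      simp [X_dvd_iff, hs']
    set Ψ := Φ + X ^ (n + 1) * Polynomial.C s with hΨ
    have hΨ0 : Ψ.coeff 0 = F := by simp [hΨ, hΦ]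
    have ha' : M * A = coeffD Dx Ψ - X ^ (n + 1) * (a + Polynomial.C (Dx s)) := by
      rw [hΨ, map_add, coeffD_X_pow_mul, coeffD_C]
      linear_combination -ha
    have hb' : M * B = coeffD Dy Ψ - X ^ (n + 1) * (b + Polynomial.C (Dy s)) := by
      rw [hΨ, map_add, coeffD_X_pow_mul, coeffD_C]
      linear_combination -hb
    have hcΨ : M * C = derivative Ψ - X ^ (n + 1) * c' := by
      rw [hΨ, map_add, derivative_X_pow_succ_mul, derivative_C]
      simp only [map_mul, map_add, map_natCast, map_one] at hc'
      linear_combination -hc - X ^ n * hc'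
    have hob := obstruction_vanishes hcomm ((pow_dvd_pow X hn).trans hI) ha' hb' hcΨ
    rw [hΨ0] at hob
    obtain ⟨l, hla, hlb⟩ := hdiv _ _ hob
    refine ⟨M + X ^ (n + 1) * Polynomial.C l, Ψ, by simp [hM], hΨ0, ?_, ?_, ?_⟩
    · obtain ⟨t, ht⟩ : X ∣ (a + Polynomial.C (Dx s)) - Polynomial.C l * A := by
        rw [X_dvd_iff, coeff_sub, hla, coeff_C_mul, hA, sub_self]
      exact ⟨t, by linear_combination -ha' + X ^ (n + 1) * ht⟩
    · obtain ⟨t, ht⟩ : X ∣ (b + Polynomial.C (Dy s)) - Polynomial.C l * B := by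
        rw [X_dvd_iff, coeff_sub, hlb, coeff_C_mul, hB, sub_self]
      exact ⟨t, by linear_combination -hb' + X ^ (n + 1) * ht⟩
    · exact ⟨c' - Polynomial.C l * C, by linear_combination -hcΨ⟩

end Algebra

/-! ### Holomorphic functions on an open subset of `ℂ²` -/

lemma iteratedDeriv_eval (q : ℂ[X]) (n : ℕ) :
    iteratedDeriv n (fun e => q.eval e) 0 = n.factorial * q.coeff n := by
  have h : ∀ (n : ℕ) (q : ℂ[X]),
      iteratedDeriv n (fun e => q.eval e) = fun e => (derivative^[n] q).eval e := by
    intro n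
    induction n with
    | zero => intro q; simp
    | succ n ih =>
      intro q
      rw [iteratedDeriv_succ', Function.iterate_succ_apply, ← ih]
      congr 1
      ext e
      simp
  rw [h]
  change (derivative^[n] q).eval 0 = _
  rw [← coeff_zero_eq_eval_zero, coeff_iterate_derivative]
  simp [Nat.descFactorial_self]

section Calculus
open MeasureTheory Metric

/-- A directional derivative of a holomorphic function of two variables is holomorphic: near `p₀` it
is `(2πi)⁻¹ ∮ f (p + t v) / t² dt` over a circle `|t| = s` of fixed radius, and the integral may be
differentiated in `p` because `fderiv f` is bounded near `p₀` by the Schwarz lemma. -/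
lemma differentiableOn_fderiv_apply {U : Set (ℂ × ℂ)} (hU : IsOpen U) {f : ℂ × ℂ → ℂ}
    (hf : DifferentiableOn ℂ f U) (v : ℂ × ℂ) :
    DifferentiableOn ℂ (fun p => fderiv ℂ f p v) U := by
  intro p₀ hp₀
  refine DifferentiableAt.differentiableWithinAt ?_
  obtain ⟨ρ, hρ, hball⟩ : ∃ ρ > 0, ball p₀ ρ ⊆ U ∩ f ⁻¹' (ball (f p₀) 1) :=
    Metric.mem_nhds_iff.1 (Filter.inter_mem (hU.mem_nhds hp₀)
      ((hf.continuousOn.continuousAt (hU.mem_nhds hp₀)).preimage_mem_nhds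
        (ball_mem_nhds _ one_pos)))
  have hfd : DifferentiableOn ℂ f (ball p₀ ρ) := hf.mono fun q hq => (hball hq).1
  set s : ℝ := ρ / (4 * (‖v‖ + 1)) with hs
  have hv := norm_nonneg v
  have hs0 : 0 < s := by positivity
  have hsv : s * ‖v‖ < ρ / 4 := by
    rw [hs, div_mul_eq_mul_div, div_lt_div_iff₀ (by positivity) (by positivity)]
    nlinarith
  have hmem : ∀ p ∈ ball p₀ (ρ / 4), ∀ t : ℂ, ‖t‖ ≤ s → p + t • v ∈ ball p₀ (ρ / 2) := by
    intro p hp t ht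
    rw [mem_ball, dist_eq_norm] at hp ⊢
    calc ‖p + t • v - p₀‖ = ‖(p - p₀) + t • v‖ := by congr 1; abel
      _ ≤ ‖p - p₀‖ + ‖t‖ * ‖v‖ := (norm_add_le _ _).trans (by rw [norm_smul])
      _ ≤ ‖p - p₀‖ + s * ‖v‖ := by gcongr
      _ < ρ / 2 := by linarith
  have hsub : ball p₀ (ρ / 2) ⊆ ball p₀ ρ := ball_subset_ball (by linarith)
  -- the radii `ρ / 4`, `ρ / 2`, `ρ` leave room for a ball of radius `ρ / 2` around each `p + t v`
  have hbound : ∀ q ∈ ball p₀ (ρ / 2), ‖fderiv ℂ f q‖ ≤ 2 / (ρ / 2) := by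
    intro q hq
    have hq' : ball q (ρ / 2) ⊆ ball p₀ ρ := ball_subset_ball' (by
      rw [mem_ball] at hq; linarith)
    refine Complex.norm_fderiv_le_div_of_mapsTo_ball (hfd.mono hq') ?_ (by positivity)
    intro z hz
    have h1 : dist (f z) (f p₀) < 1 := (hball (hq' hz)).2
    have h2 : dist (f q) (f p₀) < 1 := (hball (hsub hq)).2
    rw [mem_closedBall]
    linarith [dist_triangle_right (f z) (f q) (f p₀)]
  have hdiffAt : ∀ q ∈ ball p₀ ρ, DifferentiableAt ℂ f q := fun q hq =>
    hfd.differentiableAt (isOpen_ball.mem_nhds hq)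
  have hcm : ∀ θ : ℝ, ‖circleMap 0 s θ‖ = s := by
    intro θ; simp [circleMap, abs_of_pos hs0]
  set w : ℝ → ℂ := fun θ => deriv (circleMap 0 s) θ * ((circleMap 0 s θ - 0) ^ 2)⁻¹ with hw
  have hwc : Continuous w := by
    have h0 : ∀ θ, (circleMap 0 s θ - 0) ^ 2 ≠ 0 := by
      intro θ
      have := hcm θ
      have : circleMap 0 s θ ≠ 0 := by
        intro h; rw [h, norm_zero] at this; exact hs0.ne this
      simpa using this
    simp only [hw, deriv_circleMap]
    exact ((continuous_circleMap 0 s).mul continuous_const).mul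
      ((((continuous_circleMap 0 s).sub continuous_const).pow 2).inv₀ h0)
  -- Cauchy's formula for the derivative at `0` of `t ↦ f (p + t v)`
  have hcauchy : ∀ p ∈ ball p₀ (ρ / 4), fderiv ℂ f p v = (2 * Real.pi * Complex.I : ℂ)⁻¹ *
      ∫ θ in (0 : ℝ)..2 * Real.pi, w θ * f (p + circleMap 0 s θ • v) := by
    intro p hp
    have hl : ∀ t : ℂ, HasFDerivAt (fun t : ℂ => p + t • v)
        (ContinuousLinearMap.toSpanSingleton ℂ v) t := fun t =>
      ((ContinuousLinearMap.toSpanSingleton ℂ v).hasFDerivAt).const_add p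
    have hopen : IsOpen ((fun t : ℂ => p + t • v) ⁻¹' ball p₀ ρ) :=
      isOpen_ball.preimage (by fun_prop)
    have hd : DifferentiableOn ℂ (fun t : ℂ => f (p + t • v))
        ((fun t : ℂ => p + t • v) ⁻¹' ball p₀ ρ) := by
      intro t ht
      exact ((hdiffAt _ ht).comp t (hl t).differentiableAt).differentiableWithinAt
    have hcb : closedBall (0 : ℂ) s ⊆ (fun t : ℂ => p + t • v) ⁻¹' ball p₀ ρ := by
      intro t ht
      exact hsub (hmem p hp t (by simpa using ht))
    have h1 := Complex.cderiv_eq_deriv hopen hd hs0 hcb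
    have h2 : deriv (fun t : ℂ => f (p + t • v)) 0 = fderiv ℂ f p v := by
      have hp' : p + (0 : ℂ) • v ∈ ball p₀ ρ := hcb (by simp [hs0.le])
      have := ((hdiffAt _ hp').hasFDerivAt.comp (0 : ℂ) (hl 0)).hasDerivAt.deriv
      simpa [Function.comp_def] using this
    rw [← h2, ← h1, Complex.cderiv, circleIntegral, smul_eq_mul]
    congr 1
    refine intervalIntegral.integral_congr fun θ _ => ?_
    simp only [hw, smul_eq_mul]
    ring
  have hF : ∀ p ∈ ball p₀ (ρ / 4), Continuous fun θ => w θ * f (p + circleMap 0 s θ • v) := by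
    intro p hp
    refine hwc.mul (hfd.continuousOn.comp_continuous ?_ ?_)
    · exact continuous_const.add ((continuous_circleMap 0 s).smul continuous_const)
    · exact fun θ => hsub (hmem p hp _ (hcm θ).le)
  have hmain := intervalIntegral.hasFDerivAt_integral_of_dominated_of_fderiv_le
    (μ := volume) (a := 0) (b := 2 * Real.pi) (s := ball p₀ (ρ / 4)) (x₀ := p₀)
    (F := fun p θ => w θ * f (p + circleMap 0 s θ • v))
    (F' := fun p θ => w θ • fderiv ℂ f (p + circleMap 0 s θ • v))
    (bound := fun θ => ‖w θ‖ * (2 / (ρ / 2)))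
    (ball_mem_nhds _ (by positivity))
    (by
      filter_upwards [ball_mem_nhds p₀ (show 0 < ρ / 4 by positivity)] with p hp
      exact (hF p hp).aestronglyMeasurable)
    ((hF p₀ (mem_ball_self (by positivity))).intervalIntegrable _ _)
    (by
      refine Measurable.aestronglyMeasurable ?_
      refine hwc.measurable.smul ((measurable_fderiv ℂ f).comp ?_)
      exact (continuous_const.add
        ((continuous_circleMap 0 s).smul continuous_const)).measurable)
    (by
      refine Filter.Eventually.of_forall fun θ _ p hp => ?_
      rw [norm_smul]
      gcongr
      exact hbound _ (hmem p hp _ (hcm θ).le))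
    ((hwc.norm.mul continuous_const).intervalIntegrable _ _)
    (by
      refine Filter.Eventually.of_forall fun θ _ p hp => ?_
      have h := (hdiffAt _ (hsub (hmem p hp _ (hcm θ).le))).hasFDerivAt
      have h' := h.comp p ((hasFDerivAt_id p).add_const (circleMap 0 s θ • v))
      simpa [Function.comp_def] using h'.const_mul (w θ))
  refine (hmain.differentiableAt.const_mul (2 * Real.pi * Complex.I : ℂ)⁻¹).congr_of_eventuallyEq ?_
  filter_upwards [ball_mem_nhds p₀ (show 0 < ρ / 4 by positivity)] with p hp
  exact hcauchy p hp

lemma fderiv_fderiv_apply_comm {U : Set (ℂ × ℂ)} (hU : IsOpen U) {f : ℂ × ℂ → ℂ}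
    (hf : DifferentiableOn ℂ f U) (v w : ℂ × ℂ) {p : ℂ × ℂ} (hp : p ∈ U) :
    fderiv ℂ (fun q => fderiv ℂ f q w) p v = fderiv ℂ (fun q => fderiv ℂ f q v) p w := by
  have hd : DifferentiableAt ℂ (fderiv ℂ f) p := by
    have h : ∀ L : ℂ × ℂ →L[ℂ] ℂ, L = L (1, 0) • ContinuousLinearMap.fst ℂ ℂ ℂ +
        L (0, 1) • ContinuousLinearMap.snd ℂ ℂ ℂ := by
      intro L; ext <;> simp
    have h1 := fun u => (differentiableOn_fderiv_apply hU hf u).differentiableAt (hU.mem_nhds hp)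
    rw [show fderiv ℂ f = fun q => fderiv ℂ f q (1, 0) • ContinuousLinearMap.fst ℂ ℂ ℂ +
        fderiv ℂ f q (0, 1) • ContinuousLinearMap.snd ℂ ℂ ℂ from funext fun q => h _]
    exact ((h1 _).smul_const _).add ((h1 _).smul_const _)
  have hsymm := second_derivative_symmetric_of_eventually (f := f)
    (by filter_upwards [hU.mem_nhds hp] with q hq
        exact (hf.differentiableAt (hU.mem_nhds hq)).hasFDerivAt) hd.hasFDerivAt v w
  rw [fderiv_clm_apply hd (differentiableAt_const _),
    fderiv_clm_apply hd (differentiableAt_const _)]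
  simpa using hsymm

end Calculus

section HolAlg
variable {U : Opens (ℂ × ℂ)}

/-- The algebra of holomorphic functions on `U`, as functions on the subtype `U`, so that equality is
equality on `U`. Holomorphy is expressed through the extension by zero. -/
def Hol (U : Opens (ℂ × ℂ)) : Subalgebra ℂ (U → ℂ) where
  carrier := {f | DifferentiableOn ℂ (Function.extend Subtype.val f 0) U}
  mul_mem' {f g} hf hg := by
    refine (DifferentiableOn.mul hf hg).congr fun p hp => ?_
    lift p to U using hp
    simp
  add_mem' {f g} hf hg := by
    refine (DifferentiableOn.add hf hg).congr fun p hp => ?_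
    lift p to U using hp
    simp
  algebraMap_mem' c := by
    refine (differentiableOn_const c).congr fun p hp => ?_
    lift p to U using hp
    simp

namespace Hol

/-- Extension by zero to `ℂ²`. -/
noncomputable def zext (f : Hol U) : ℂ × ℂ → ℂ := Function.extend Subtype.val f.1 0

lemma differentiableOn_ext (f : Hol U) : DifferentiableOn ℂ (zext f) U := f.2

lemma zext_apply (f : Hol U) (p : U) : zext f p = f.1 p :=
  Subtype.val_injective.extend_apply _ _ _

open Classical in
/-- The restriction of `f` to `U`, with junk value `0` if `f` is not holomorphic on `U`. -/
noncomputable def mk (U : Opens (ℂ × ℂ)) (f : ℂ × ℂ → ℂ) : Hol U :=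
  if h : DifferentiableOn ℂ f U then
    ⟨fun p => f p, h.congr fun p hp => by
      lift p to U using hp
      exact Subtype.val_injective.extend_apply _ _ _⟩
  else 0

lemma mk_apply {f : ℂ × ℂ → ℂ} (h : DifferentiableOn ℂ f U) (p : U) : (mk U f).1 p = f p := by
  rw [mk, dif_pos h]

lemma hol_ext {f g : Hol U} (h : ∀ p : U, f.1 p = g.1 p) : f = g := Subtype.ext (funext h)

lemma fderiv_congr {f g : ℂ × ℂ → ℂ} (h : ∀ p : U, f p = g p) (p : U) :
    fderiv ℂ f p = fderiv ℂ g p := by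
  refine Filter.EventuallyEq.fderiv_eq ?_
  filter_upwards [U.isOpen.mem_nhds p.2] with q hq
  exact h ⟨q, hq⟩

lemma differentiableAt_ext (f : Hol U) (p : U) : DifferentiableAt ℂ (zext f) p :=
  (differentiableOn_ext f).differentiableAt (U.isOpen.mem_nhds p.2)

/-- The derivative of `f` in the direction `v`. -/
noncomputable def dirFun (v : ℂ × ℂ) (f : Hol U) : Hol U := mk U fun p => fderiv ℂ (zext f) p v

lemma dirFun_apply (v : ℂ × ℂ) (f : Hol U) (p : U) :
    (dirFun v f).1 p = fderiv ℂ (zext f) p v :=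
  mk_apply (differentiableOn_fderiv_apply U.isOpen (differentiableOn_ext f) v) p

/-- The derivative in the direction `v`, as a derivation of `Hol U`. -/
noncomputable def D (v : ℂ × ℂ) : Derivation ℂ (Hol U) (Hol U) :=
  Derivation.mk'
    { toFun := dirFun v
      map_add' := by
        intro f g
        refine hol_ext fun p => ?_
        change _ = (dirFun v f).1 p + (dirFun v g).1 p
        rw [dirFun_apply, dirFun_apply, dirFun_apply,
          fderiv_congr (g := (zext f) + (zext g)) (fun q => by simp [zext_apply]),
          fderiv_add (differentiableAt_ext f p) (differentiableAt_ext g p)]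
        rfl
      map_smul' := by
        intro c f
        refine hol_ext fun p => ?_
        change _ = c * (dirFun v f).1 p
        rw [dirFun_apply, dirFun_apply,
          fderiv_congr (g := c • (zext f)) (fun q => by simp [zext_apply]),
          fderiv_const_smul (differentiableAt_ext f p)]
        rfl } (by
      intro f g
      refine hol_ext fun p => ?_
      change (dirFun v (f * g)).1 p = f.1 p * (dirFun v g).1 p + g.1 p * (dirFun v f).1 p
      rw [dirFun_apply, dirFun_apply, dirFun_apply,
        fderiv_congr (g := (zext f) * (zext g)) (fun q => by simp [zext_apply]),
        fderiv_mul (differentiableAt_ext f p) (differentiableAt_ext g p)]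
      simp [zext_apply])

lemma D_apply (v : ℂ × ℂ) {f : Hol U} {f' : ℂ × ℂ → ℂ} (h : ∀ p : U, f' p = f.1 p) (p : U) :
    (D v f).1 p = fderiv ℂ f' p v := by
  rw [fderiv_congr (g := (zext f)) (fun q => by rw [h, zext_apply])]
  exact dirFun_apply v f p

lemma D_comm (v w : ℂ × ℂ) (f : Hol U) : D v (D w f) = D w (D v f) := by
  refine hol_ext fun p => ?_
  rw [D_apply v (f' := fun q => fderiv ℂ (zext f) q w)
      (fun q => (D_apply w (zext_apply f) q).symm),
    D_apply w (f' := fun q => fderiv ℂ (zext f) q v)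
      (fun q => (D_apply v (zext_apply f) q).symm)]
  exact fderiv_fderiv_apply_comm U.isOpen (differentiableOn_ext f) v w p.2

/-- A holomorphic pair `(a, b)` pointwise proportional to a nowhere vanishing holomorphic pair
`(u, v)` is a holomorphic multiple of it: the ratio is `a / u` where `u ≠ 0` and `b / v` where
`v ≠ 0`. -/
lemma exists_ratio {u v : Hol U} (huv : ∀ p : U, (u.1 p, v.1 p) ≠ (0, 0)) (a b : Hol U)
    (h : u * b = v * a) : ∃ l : Hol U, a = l * u ∧ b = l * v := by
  classical
  have h' : ∀ p : U, u.1 p * b.1 p = v.1 p * a.1 p := fun p => congrFun (congrArg Subtype.val h) p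
  set l : ℂ × ℂ → ℂ := fun p => if (zext u) p ≠ 0 then (zext a) p / (zext u) p else (zext b) p / (zext v) p
    with hl
  have hld : DifferentiableOn ℂ l U := by
    intro p hp
    refine DifferentiableAt.differentiableWithinAt ?_
    lift p to U using hp
    by_cases hu : (zext u) p = 0
    · have hv : (zext v) p ≠ 0 := by
        intro hv
        apply huv p
        rw [← zext_apply, ← zext_apply, hu, hv]
      refine ((differentiableAt_ext b p).mul
        ((differentiableAt_ext v p).inv hv)).congr_of_eventuallyEq ?_
      filter_upwards [U.isOpen.mem_nhds p.2,
        (differentiableAt_ext v p).continuousAt.eventually_ne hv] with q hq hvq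
      simp only [hl]
      split_ifs with huq
      · lift q to U using hq
        have := h' q
        simp only [zext_apply] at *
        simp only [Pi.mul_apply, Pi.inv_apply, zext_apply]
        field_simp
        linear_combination -this
      · simp [div_eq_mul_inv]
    · refine ((differentiableAt_ext a p).mul
        ((differentiableAt_ext u p).inv hu)).congr_of_eventuallyEq ?_
      filter_upwards [(differentiableAt_ext u p).continuousAt.eventually_ne hu] with q huq
      simp [hl, huq, div_eq_mul_inv]
  have hlp : ∀ p : U, (mk U l).1 p =
      if u.1 p ≠ 0 then a.1 p / u.1 p else b.1 p / v.1 p := by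
    intro p
    rw [mk_apply hld]
    simp [hl, zext_apply]
  refine ⟨mk U l, hol_ext fun p => ?_, hol_ext fun p => ?_⟩
  · change a.1 p = (mk U l).1 p * u.1 p
    have h1 := h' p
    have h2 := huv p
    rw [hlp]
    by_cases hu : u.1 p = 0
    · have hv : v.1 p ≠ 0 := by simpa [hu] using h2
      have : a.1 p = 0 := by simpa [hu, hv] using h1
      simp [hu, this]
    · simp [hu]
  · change b.1 p = (mk U l).1 p * v.1 p
    have h1 := h' p
    have h2 := huv p
    rw [hlp]
    by_cases hu : u.1 p = 0
    · have hv : v.1 p ≠ 0 := by simpa [hu] using h2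
      simp [hu, hv]
    · simp only [ne_eq, hu, not_false_eq_true, if_true]
      field_simp
      linear_combination h1

end Hol

/-! ### Polynomial families of holomorphic functions -/

lemma coeffD_eval {K : Type*} [CommRing K] [Algebra ℂ K] (D : Derivation ℂ K K) (S : K[X])
    (c : ℂ) : D (S.eval (algebraMap ℂ K c)) = (coeffD D S).eval (algebraMap ℂ K c) := by
  induction S using Polynomial.induction_on' with
  | add p q hp hq => simp [hp, hq]
  | monomial n a =>
    rw [← C_mul_X_pow_eq_monomial, mul_comm, coeffD_X_pow_mul, coeffD_C]
    simp only [eval_mul, eval_pow, eval_X, eval_C, ← map_pow, Derivation.leibniz,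
      Derivation.map_algebraMap, smul_eq_mul, mul_zero, add_zero]

/-- `f p e` is, for `p ∈ U`, the value at `p` of the polynomial `S` over `Hol U` with `X` set to the
constant `e`. -/
def IsFam (f : ℂ × ℂ → ℂ → ℂ) (S : (Hol U)[X]) : Prop :=
  ∀ (p : U) (e : ℂ), f p e = (S.eval (algebraMap ℂ (Hol U) e)).1 p

namespace IsFam
variable {f g : ℂ × ℂ → ℂ → ℂ} {S T : (Hol U)[X]}

/-- Evaluation of a holomorphic function at `p`. -/
def ev (p : U) : Hol U →+* ℂ := (Pi.evalRingHom (fun _ : U => ℂ) p).comp (Hol U).val.toRingHom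

lemma eval_apply_eq (S : (Hol U)[X]) (p : U) (e : ℂ) :
    (S.eval (algebraMap ℂ (Hol U) e)).1 p = (S.map (ev p)).eval e := by
  rw [eval_map]
  exact Polynomial.hom_eval₂ S (RingHom.id _) (ev p) (algebraMap ℂ (Hol U) e)

lemma eq_eval (h : IsFam f S) (p : U) : f p = fun e => (S.map (ev p)).eval e := by
  ext e
  rw [h p e, eval_apply_eq]

lemma congr (h : IsFam f S) (hfg : ∀ (p : U) e, g p e = f p e) : IsFam g S := fun p e =>
  (hfg p e).trans (h p e)

lemma add (hf : IsFam f S) (hg : IsFam g T) : IsFam (fun p e => f p e + g p e) (S + T) := by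
  intro p e; simp [hf p e, hg p e]

lemma sub (hf : IsFam f S) (hg : IsFam g T) : IsFam (fun p e => f p e - g p e) (S - T) := by
  intro p e; simp [hf p e, hg p e]

lemma mul (hf : IsFam f S) (hg : IsFam g T) : IsFam (fun p e => f p e * g p e) (S * T) := by
  intro p e; simp [hf p e, hg p e]

lemma const {f : ℂ × ℂ → ℂ} {a : Hol U} (h : ∀ p : U, f p = a.1 p) :
    IsFam (fun p _ => f p) (C a) := by
  intro p e; simp [h p]

lemma param_pow (n : ℕ) : IsFam (U := U) (fun _ e => e ^ n) (X ^ n) := by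
  intro p e
  simp

lemma one : IsFam (U := U) (fun _ _ => 1) 1 := by
  intro p e; simp

lemma sum {ι : Type*} {s : Finset ι} {f : ι → ℂ × ℂ → ℂ → ℂ} {S : ι → (Hol U)[X]}
    (h : ∀ i ∈ s, IsFam (f i) (S i)) : IsFam (fun p e => ∑ i ∈ s, f i p e) (∑ i ∈ s, S i) := by
  intro p e
  rw [eval_finsetSum]
  simp only [AddSubmonoidClass.coe_finsetSum, Finset.sum_apply]
  exact Finset.sum_congr rfl fun i hi => h i hi p e

lemma deriv_param (h : IsFam f S) :
    IsFam (fun p e => deriv (fun e' => f p e') e) (derivative S) := by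
  intro p e
  rw [eval_apply_eq]
  change deriv (f p) e = _
  rw [h.eq_eval p]
  simp [derivative_map]

lemma fderiv_space (h : IsFam f S) (v : ℂ × ℂ) :
    IsFam (fun p e => fderiv ℂ (fun q => f q e) p v) (coeffD (Hol.D v) S) := by
  intro p e
  rw [← coeffD_eval, Hol.D_apply v (f' := fun q => f q e) (fun q => h q e)]

lemma iteratedDeriv_zero (h : IsFam f S) (p : U) (n : ℕ) :
    iteratedDeriv n (fun e => f p e) 0 = n.factorial * (S.coeff n).1 p := by
  rw [show (fun e => f p e) = f p from rfl, h.eq_eval p, iteratedDeriv_eval, coeff_map]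
  rfl

lemma iteratedDeriv_eq_zero (h : IsFam f S) {m : ℕ} (hS : X ^ m ∣ S) (p : U) :
    ∀ n < m, iteratedDeriv n (fun e => f p e) 0 = 0 := by
  intro n hn
  rw [h.iteratedDeriv_zero, X_pow_dvd_iff.1 hS n hn]
  simp

lemma X_pow_dvd (h : IsFam f S) {m : ℕ}
    (hS : ∀ p ∈ U, ∀ n < m, iteratedDeriv n (fun e => f p e) 0 = 0) : X ^ m ∣ S := by
  rw [X_pow_dvd_iff]
  intro n hn
  refine Hol.hol_ext fun p => ?_
  have := hS p p.2 n hn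
  rw [h.iteratedDeriv_zero] at this
  simpa [Nat.factorial_ne_zero] using this

lemma integrability {A B C' : ℂ × ℂ → ℂ → ℂ} {SA SB SC : (Hol U)[X]} (hA : IsFam A SA)
    (hB : IsFam B SB) (hC : IsFam C' SC) :
    IsFam (fun p e => intCoeff A B C' p e)
      (bracket (Hol.D (1, 0)) (Hol.D (0, 1)) SA SB SC) :=
  ((hA.mul ((hC.fderiv_space (0, 1)).sub hB.deriv_param)).add
    (hB.mul (hA.deriv_param.sub (hC.fderiv_space (1, 0))))).add
    (hC.mul ((hB.fderiv_space (1, 0)).sub (hA.fderiv_space (0, 1))))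

end IsFam
end HolAlg

/-! ### The Françoise sequence and the first integral -/

lemma coeff_succ_mul_linear {K : Type*} [CommRing K] (H : K[X]) (a b : K) (j : ℕ) :
    (H * (C a + X * C b)).coeff (j + 1) = H.coeff (j + 1) * a + H.coeff j * b := by
  rw [mul_add, coeff_add, coeff_mul_C, ← mul_assoc, coeff_mul_C, coeff_mul_X]

/-- The coefficient of `X^(j+1)` in `dΦ ≡ H (dF + X ω)`, with the alternating signs that turn it into
a Françoise relation. -/
lemma francoise_relation {K : Type*} [CommRing K] [Algebra ℂ K] (D : Derivation ℂ K K)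
    {H Φ : K[X]} {F P : K} {k j : ℕ}
    (h : X ^ (k + 1) ∣ coeffD D Φ - H * (C (D F) + X * C P)) (hj : j + 1 ≤ k) :
    (-1) ^ j * H.coeff j * P = (-1) ^ (j + 1) * H.coeff (j + 1) * D F +
      D ((-1) ^ (j + 1 + 1) * Φ.coeff (j + 1)) := by
  have h1 := X_pow_dvd_iff.1 h (j + 1) (by omega)
  rw [coeff_sub, coeff_coeffD, coeff_succ_mul_linear] at h1
  have h2 : ∀ m : ℕ, D ((-1) ^ m) = 0 := by
    intro m
    rcases neg_one_pow_eq_or K m with h | h <;> simp [h]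
  rw [Derivation.leibniz, h2]
  simp only [smul_eq_mul, mul_zero, add_zero]
  linear_combination -(-1) ^ j * h1

/-- If `M A ≡ ∂Φ`, then `A ≡ N ∂Φ` for the inverse `N` of `M`, also after truncating `N` and `Φ`. -/
lemma space_congruence {K : Type*} [CommRing K] [Algebra ℂ K] (D : Derivation ℂ K K)
    {N M Φ A : K[X]} {k : ℕ} (hNM : X ^ (k + 1) ∣ 1 - N * M)
    (h : X ^ (k + 1) ∣ coeffD D Φ - M * A) :
    X ^ (k + 1) ∣ A - trunc k N * coeffD D (trunc k Φ) := by
  obtain ⟨s, hs⟩ := X_pow_dvd_sub_trunc k N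
  obtain ⟨t, ht⟩ := X_pow_dvd_sub_trunc k Φ
  obtain ⟨u, hu⟩ := hNM
  obtain ⟨w, hw⟩ := h
  rw [show trunc k N = N - X ^ (k + 1) * s by linear_combination -hs,
    show trunc k Φ = Φ - X ^ (k + 1) * t by linear_combination -ht, map_sub, coeffD_X_pow_mul]
  exact ⟨u * A - N * w + N * coeffD D t + s * (coeffD D Φ - X ^ (k + 1) * coeffD D t), by
    linear_combination A * hu - N * hw⟩

/-- The analogue of `space_congruence` for `∂_ε`, which loses one order because it acts on
`X^(k+1)`. -/
lemma param_congruence {K : Type*} [CommRing K] {N M Φ C : K[X]} {k : ℕ}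
    (hNM : X ^ (k + 1) ∣ 1 - N * M) (h : X ^ k ∣ derivative Φ - M * C) :
    X ^ k ∣ C - trunc k N * derivative (trunc k Φ) := by
  obtain ⟨s, hs⟩ := X_pow_dvd_sub_trunc k N
  obtain ⟨t, ht⟩ := X_pow_dvd_sub_trunc k Φ
  obtain ⟨u, hu⟩ := hNM
  obtain ⟨w, hw⟩ := h
  rw [show trunc k N = N - X ^ (k + 1) * s by linear_combination -hs,
    show trunc k Φ = Φ - X ^ (k + 1) * t by linear_combination -ht, map_sub,
    derivative_X_pow_succ_mul]
  set d := ((k : K[X]) + 1) * t + X * derivative t with hd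
  exact ⟨X * u * C - N * w + N * d + X * s * (derivative Φ - X ^ k * d), by
    linear_combination C * hu - N * hw⟩

/-- Theorem 7(iii): if Ω = (G·(∂F/∂x + εP), G·(∂F/∂y + εQ), Σ ε^{i−1}R_i), with
G = 1 + Σ_{i=1}^k ε^i G_i, solves the Godbillon-Vey integrability equation up to order
k (the coefficients of ε^n of ⟨Ω ∧ dΩ⟩ vanish for n ≤ k−1), then there are a Françoise
sequence (g_i, r_i) of order k for dF + εω and holomorphic n_i such that with
N = 1 + Σ ε^i n_i and F_ε = F + Σ (−1)^{i+1} ε^i r_i one has A ≡ N·∂F_ε/∂x and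
B ≡ N·∂F_ε/∂y mod ε^{k+1}, and C ≡ N·∂F_ε/∂ε mod ε^k. -/
theorem godbillon_vey_gives_francoise_and_first_integral
    (U : Set (ℂ × ℂ)) (hU : IsOpen U) (k : ℕ) (hk : 1 ≤ k)
    (F P Q : ℂ × ℂ → ℂ) (G R : ℕ → ℂ × ℂ → ℂ)
    (hF : DifferentiableOn ℂ F U)
    (hdF : ∀ p ∈ U, (pdx F p, pdy F p) ≠ (0, 0))
    (hP : DifferentiableOn ℂ P U) (hQ : DifferentiableOn ℂ Q U)
    (hGd : ∀ i, 1 ≤ i → i ≤ k → DifferentiableOn ℂ (G i) U)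
    (hRd : ∀ i, 1 ≤ i → i ≤ k → DifferentiableOn ℂ (R i) U)
    (hint : ∀ p ∈ U, ∀ n < k,
      iteratedDeriv n
        (fun ε : ℂ => intCoeff
          (fun q e => GserGV k G q e * (pdx F q + e * P q))
          (fun q e => GserGV k G q e * (pdy F q + e * Q q))
          (fun q e => CserGV k R q e) p ε) 0 = 0) :
    ∃ g r nn : ℕ → ℂ × ℂ → ℂ,
      (∀ p, g 0 p = 1) ∧
      (∀ i, 1 ≤ i → i ≤ k → DifferentiableOn ℂ (g i) U ∧ DifferentiableOn ℂ (r i) U ∧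
        DifferentiableOn ℂ (nn i) U) ∧
      (∀ i, 1 ≤ i → i ≤ k → ∀ p ∈ U,
        g (i - 1) p * P p = g i p * pdx F p + pdx (r i) p ∧
        g (i - 1) p * Q p = g i p * pdy F p + pdy (r i) p) ∧
      (∀ p ∈ U,
        (∀ n < k + 1,
          iteratedDeriv n (fun e : ℂ =>
            GserGV k G p e * (pdx F p + e * P p) -
              (1 + ∑ i ∈ Finset.Icc 1 k, e ^ i * nn i p) * pdx (Feps k F r e) p) 0 = 0) ∧
        (∀ n < k + 1,
          iteratedDeriv n (fun e : ℂ =>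
            GserGV k G p e * (pdy F p + e * Q p) -
              (1 + ∑ i ∈ Finset.Icc 1 k, e ^ i * nn i p) * pdy (Feps k F r e) p) 0 = 0) ∧
        (∀ n < k,
          iteratedDeriv n (fun e : ℂ =>
            CserGV k R p e -
              (1 + ∑ i ∈ Finset.Icc 1 k, e ^ i * nn i p) *
                deriv (fun e' : ℂ => Feps k F r e' p) e) 0 = 0)) := by
  lift U to Opens (ℂ × ℂ) using hU
  set Dx : Derivation ℂ (Hol U) (Hol U) := Hol.D (1, 0) with hDx
  set Dy : Derivation ℂ (Hol U) (Hol U) := Hol.D (0, 1) with hDy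
  set f : Hol U := Hol.mk U F with hf
  have hfF : ∀ p : U, F p = f.1 p := fun p => (Hol.mk_apply hF p).symm
  have hFx : ∀ p : U, pdx F p = (Dx f).1 p := fun p => (Hol.D_apply _ hfF p).symm
  have hFy : ∀ p : U, pdy F p = (Dy f).1 p := fun p => (Hol.D_apply _ hfF p).symm
  have hPp : ∀ p : U, P p = (Hol.mk U P).1 p := fun p => (Hol.mk_apply hP p).symm
  have hQp : ∀ p : U, Q p = (Hol.mk U Q).1 p := fun p => (Hol.mk_apply hQ p).symm
  set SG : (Hol U)[X] := 1 + ∑ i ∈ Finset.Icc 1 k, X ^ i * C (Hol.mk U (G i)) with hSG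
  have famG : IsFam (GserGV k G) SG := by
    refine IsFam.one.add (IsFam.sum fun i hi => (IsFam.param_pow i).mul (IsFam.const fun p => ?_))
    rw [Finset.mem_Icc] at hi
    exact (Hol.mk_apply (hGd i hi.1 hi.2) p).symm
  set SC : (Hol U)[X] := ∑ i ∈ Finset.Icc 1 k, X ^ (i - 1) * C (Hol.mk U (R i)) with hSC
  have famC : IsFam (CserGV k R) SC := by
    refine IsFam.sum fun i hi => (IsFam.param_pow (i - 1)).mul (IsFam.const fun p => ?_)
    rw [Finset.mem_Icc] at hi
    exact (Hol.mk_apply (hRd i hi.1 hi.2) p).symm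
  have famX : IsFam (U := U) (fun _ e => e) X :=  by
    simpa using IsFam.param_pow (U := U) 1
  set SA : (Hol U)[X] := SG * (C (Dx f) + X * C (Hol.mk U P)) with hSA
  set SB : (Hol U)[X] := SG * (C (Dy f) + X * C (Hol.mk U Q)) with hSB
  have famA : IsFam (fun q e => GserGV k G q e * (pdx F q + e * P q)) SA :=
    famG.mul ((IsFam.const hFx).add (famX.mul (IsFam.const hPp)))
  have famB : IsFam (fun q e => GserGV k G q e * (pdy F q + e * Q q)) SB :=
    famG.mul ((IsFam.const hFy).add (famX.mul (IsFam.const hQp)))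
  have hI : X ^ k ∣ bracket Dx Dy SA SB SC := (famA.integrability famB famC).X_pow_dvd hint
  have hSG0 : SG.coeff 0 = 1 := by
    rw [hSG, coeff_add, finsetSum_coeff, Finset.sum_eq_zero]
    · simp
    · intro i hi
      rw [Finset.mem_Icc] at hi
      simp only [mul_coeff_zero, coeff_X_pow]
      rw [if_neg (by omega), zero_mul]
  obtain ⟨M, Φ, hM, hΦ, hMx, hMy, hMe⟩ := exists_integrating_factor (Dx := Dx) (Dy := Dy)
    (A := SA) (B := SB) (C := SC)
    (Hol.D_comm _ _) f
    (Hol.exists_ratio fun p => by rw [← hFx, ← hFy]; exact hdF p p.2)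
    (by simp [hSA, hSG0]) (by simp [hSB, hSG0]) hI k le_rfl
  obtain ⟨N, hN, hNM⟩ := exists_truncated_inverse hM k
  set H := M * SG with hH
  have hH0 : H.coeff 0 = 1 := by simp [hH, hM, hSG0]
  set g : ℕ → Hol U := fun i => (-1) ^ i * H.coeff i with hg
  set r : ℕ → Hol U := fun i => (-1) ^ (i + 1) * Φ.coeff i with hr
  have famN : IsFam (fun p e => 1 + ∑ i ∈ Finset.Icc 1 k, e ^ i * Hol.zext (N.coeff i) p)
      (trunc k N) := by
    rw [trunc, hN, map_one]
    exact IsFam.one.add (IsFam.sum fun i _ =>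
      (IsFam.param_pow i).mul (IsFam.const (Hol.zext_apply _)))
  have famΦ : IsFam (fun p e => Feps k F (fun i => Hol.zext (r i)) e p) (trunc k Φ) := by
    have h : IsFam (fun p e => F p + ∑ i ∈ Finset.Icc 1 k, e ^ i * Hol.zext (Φ.coeff i) p)
        (trunc k Φ) := by
      rw [trunc, hΦ]
      exact (IsFam.const hfF).add (IsFam.sum fun i _ =>
        (IsFam.param_pow i).mul (IsFam.const (Hol.zext_apply _)))
    refine h.congr fun p e => ?_
    rw [Feps]
    congr 1
    refine Finset.sum_congr rfl fun i _ => ?_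
    have h1 : Hol.zext (r i) p = (-1) ^ (i + 1) * Hol.zext (Φ.coeff i) p := by
      rw [Hol.zext_apply, Hol.zext_apply]; rfl
    have h2 : ((-1 : ℂ) ^ (i + 1)) * (-1) ^ (i + 1) = 1 := by
      rw [← mul_pow]; simp
    rw [h1]
    linear_combination (e ^ i * Hol.zext (Φ.coeff i) p) * h2
  have hgoal : ∀ j, j + 1 ≤ k →
      g j * Hol.mk U P = g (j + 1) * Dx f + Dx (r (j + 1)) ∧
      g j * Hol.mk U Q = g (j + 1) * Dy f + Dy (r (j + 1)) := by
    intro j hj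
    rw [hSA, ← mul_assoc] at hMx
    rw [hSB, ← mul_assoc] at hMy
    exact ⟨francoise_relation Dx hMx hj, francoise_relation Dy hMy hj⟩
  have hg0 : ∀ j (p : U), (if j = 0 then (fun _ => 1) else Hol.zext (g j) : ℂ × ℂ → ℂ) p
      = (g j).1 p := by
    intro j p
    split_ifs with hj
    · simp [hj, hg, hH0]
    · exact Hol.zext_apply _ _
  -- `g 0` must be `1` on all of `ℂ²`, while the extension of `1` by zero is `1` only on `U`
  refine ⟨fun i => if i = 0 then (fun _ => 1) else Hol.zext (g i), fun i => Hol.zext (r i),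
    fun i => Hol.zext (N.coeff i), fun p => by simp, ?_, ?_, ?_⟩
  · intro i hi _
    refine ⟨?_, Hol.differentiableOn_ext _, Hol.differentiableOn_ext _⟩
    simp only [if_neg (show i ≠ 0 by omega)]
    exact Hol.differentiableOn_ext _
  · intro i hi hik p hp
    obtain ⟨j, rfl⟩ : ∃ j, i = j + 1 := ⟨i - 1, by omega⟩
    lift p to U using hp
    have h := hgoal j hik
    have hr' : ∀ v, fderiv ℂ (Hol.zext (r (j + 1))) p v = (Hol.D v (r (j + 1))).1 p := fun v =>
      (Hol.D_apply v (Hol.zext_apply _) p).symm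
    simp only [Nat.add_sub_cancel, hg0, hFx, hFy, hPp, hQp]
    rw [pdx, pdy, hr', hr']
    exact ⟨congrFun (congrArg Subtype.val h.1) p, congrFun (congrArg Subtype.val h.2) p⟩
  · intro p hp
    lift p to U using hp
    exact ⟨(famA.sub (famN.mul (famΦ.fderiv_space (1, 0)))).iteratedDeriv_eq_zero
        (space_congruence _ hNM hMx) p,
      (famB.sub (famN.mul (famΦ.fderiv_space (0, 1)))).iteratedDeriv_eq_zero
        (space_congruence _ hNM hMy) p,
      (famC.sub (famN.mul famΦ.deriv_param)).iteratedDeriv_eq_zero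
        (param_congruence hNM hMe) p⟩
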